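/- Let f ∈ 𝓔 be a simple exponential polynomial. Then there exist a unit u of 𝓔, a nonzero μ ∈ ℂ, a natural number n, and nonzero complex numbers α₁,…,α_n such that f(z) = u(z)·∏_{i=1}^{n} (1 − α_i e^{μz}) for all z ∈ ℂ. -/

import Mathlib

open Complex Set

noncomputable section

/-- `f` is an exponential polynomial, i.e. an element of the ring `𝓔`. -/
def IsExpPoly (f : ℂ → ℂ) : Prop :=
  ∃ (N : ℕ) (lam mu : Fin N → ℂ),
    ∀ z : ℂ, f z = ∑ i, lam i * Complex.exp (mu i * z)

/-- `h` divides `f` in the ring `𝓔`. -/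
def EDvd (h f : ℂ → ℂ) : Prop :=
  ∃ q : ℂ → ℂ, IsExpPoly q ∧ f = h * q

/-- `f` is a unit of the ring `𝓔`. -/
def EUnit (f : ℂ → ℂ) : Prop :=
  IsExpPoly f ∧ ∃ g : ℂ → ℂ, IsExpPoly g ∧ f * g = 1

/-- `f` is irreducible in the ring `𝓔`. -/
def EIrreducible (f : ℂ → ℂ) : Prop :=
  IsExpPoly f ∧ f ≠ 0 ∧ ¬ EUnit f ∧
    ∀ g h : ℂ → ℂ, IsExpPoly g → IsExpPoly h → f = g * h → EUnit g ∨ EUnit h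

/-- canonical representation: pairwise distinct exponents, nonzero coefficients. -/
def IsCanonicalRep (f : ℂ → ℂ) {N : ℕ} (lam mu : Fin N → ℂ) : Prop :=
  (∀ i, lam i ≠ 0) ∧ Function.Injective mu ∧
    ∀ z : ℂ, f z = ∑ i, lam i * Complex.exp (mu i * z)

/-- `f` is a simple exponential polynomial: its support has `ℚ`-dimension 1. -/
def IsSimple (f : ℂ → ℂ) : Prop :=
  ∃ (N : ℕ) (lam mu : Fin N → ℂ), IsCanonicalRep f lam mu ∧
    Module.finrank ℚ (Submodule.span ℚ (Set.range mu)) = 1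

/-- Transcendence degree over `ℚ` of (the field generated by) a set of complex numbers. -/
noncomputable def trdegQ (s : Set ℂ) : Cardinal.{0} :=
  ⨆ t : {t : Finset ℂ // ↑t ⊆ s ∧ AlgebraicIndependent ℚ (Subtype.val : {x : ℂ // x ∈ t} → ℂ)},
    (t.1.card : Cardinal)

/-- Schanuel's Conjecture. -/
def SchanuelConjecture : Prop :=
  ∀ (n : ℕ) (lam : Fin n → ℂ), LinearIndependent ℚ lam →
    (n : Cardinal) ≤ trdegQ (Set.range lam ∪ Set.range fun i => Complex.exp (lam i))

/-! Clearing denominators, the exponents are `μᵢ = μ₀ + eᵢ w` with `μ₀` one of them and `eᵢ ∈ ℕ`,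
so that `f(z) = e^{μ₀ z} P(e^{w z})` for a polynomial `P` whose constant coefficient is the
coefficient of `e^{μ₀ z}` in `f`. As `P(0) ≠ 0`, every root `r` of `P` is nonzero, and `P` is
`P(0)` times the product of the factors `1 - r⁻¹ X`. -/

theorem exists_ne_zero_forall_exists_smul_eq_of_finrank_span_eq_one (R K : Type*) {V ι : Type*}
    [CommRing R] [Field K] [Algebra R K] [IsFractionRing R K] [AddCommGroup V] [Module R V]
    [Module K V] [IsScalarTower R K V] [Finite ι] (v : ι → V)
    (hv : Module.finrank K (Submodule.span K (range v)) = 1) :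
    ∃ w : V, w ≠ 0 ∧ ∀ i, ∃ r : R, r • w = v i := by
  obtain ⟨⟨x, _⟩, hx, hspan⟩ := finrank_eq_one_iff'.mp hv
  have hxv (i) : ∃ q : K, q • x = v i := by
    obtain ⟨q, hq⟩ := hspan ⟨v i, Submodule.subset_span (mem_range_self i)⟩
    exact ⟨q, congrArg Subtype.val hq⟩
  choose q hq using hxv
  obtain ⟨b, hb⟩ := IsLocalization.exist_integer_multiples_of_finite (nonZeroDivisors R) q
  have hb₀ : algebraMap R K b ≠ 0 := (IsLocalization.map_units K b).ne_zero
  refine ⟨(algebraMap R K b)⁻¹ • x, smul_ne_zero (inv_ne_zero hb₀) (by simpa using hx),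
    fun i ↦ ?_⟩
  obtain ⟨r, hr⟩ := hb i
  refine ⟨r, ?_⟩
  rw [← algebraMap_smul K r, hr, Algebra.smul_def, smul_smul, mul_right_comm,
    mul_inv_cancel₀ hb₀, one_mul, hq]

theorem exists_eq_add_nsmul_of_finrank_span_eq_one {V ι : Type*} [AddCommGroup V] [Module ℚ V]
    [Finite ι] (v : ι → V) (hv : Module.finrank ℚ (Submodule.span ℚ (range v)) = 1) :
    ∃ (i₀ : ι) (w : V) (e : ι → ℕ), w ≠ 0 ∧ ∀ i, v i = v i₀ + e i • w := by
  have : Nonempty ι := by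
    by_contra hι
    rw [not_nonempty_iff] at hι
    rw [range_eq_empty, Submodule.span_empty, finrank_bot] at hv
    exact zero_ne_one hv
  obtain ⟨w, hw, hwv⟩ := exists_ne_zero_forall_exists_smul_eq_of_finrank_span_eq_one ℤ ℚ v hv
  choose k hk using hwv
  obtain ⟨i₀, hmin⟩ := Finite.exists_min k
  choose e he using fun i ↦ Int.le.dest (hmin i)
  refine ⟨i₀, w, e, hw, fun i ↦ ?_⟩
  rw [← hk i, ← he i, add_smul, hk, natCast_zsmul]

section Polynomial

open Polynomial

theorem ne_zero_of_mem_roots_of_coeff_zero_ne_zero {R : Type*} [CommRing R] [IsDomain R]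
    {P : R[X]} (hP₀ : P.coeff 0 ≠ 0) {r : R} (hr : r ∈ P.roots) : r ≠ 0 := by
  rintro rfl
  exact hP₀ (coeff_zero_eq_eval_zero P ▸ isRoot_of_mem_roots hr)

theorem eval_eq_coeff_zero_mul_prod_one_sub_inv_mul {K : Type*} [Field K] {P : K[X]}
    (hP : P.Splits) (hP₀ : P.coeff 0 ≠ 0) (x : K) :
    P.eval x = P.coeff 0 * (P.roots.map fun r ↦ 1 - r⁻¹ * x).prod := by
  have hroots : ∀ r ∈ P.roots, x - r = (0 - r) * (1 - r⁻¹ * x) := by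
    intro r hr
    have hr₀ : r ≠ 0 := ne_zero_of_mem_roots_of_coeff_zero_ne_zero hP₀ hr
    field_simp
    ring
  rw [coeff_zero_eq_eval_zero, hP.eval_eq_prod_roots, hP.eval_eq_prod_roots, mul_assoc,
    ← Multiset.prod_map_mul, Multiset.map_congr rfl hroots]

theorem exists_eval_eq_coeff_zero_mul_prod_one_sub_mul {K : Type*} [Field K] {P : K[X]}
    (hP : P.Splits) (hP₀ : P.coeff 0 ≠ 0) :
    ∃ (n : ℕ) (α : Fin n → K), (∀ i, α i ≠ 0) ∧
      ∀ x, P.eval x = P.coeff 0 * ∏ i, (1 - α i * x) := by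
  obtain ⟨l, hl⟩ : ∃ l : List K, (l : Multiset K) = P.roots := ⟨_, P.roots.coe_toList⟩
  refine ⟨l.length, fun i ↦ l[i.1]⁻¹, fun i ↦ inv_ne_zero ?_, fun x ↦ ?_⟩
  · have hroot : l[i.1] ∈ P.roots := hl ▸ Multiset.mem_coe.mpr (l.getElem_mem i.2)
    exact ne_zero_of_mem_roots_of_coeff_zero_ne_zero hP₀ hroot
  · rw [eval_eq_coeff_zero_mul_prod_one_sub_inv_mul hP hP₀, ← hl, Multiset.map_coe,
      Multiset.prod_coe, Fin.prod_univ_fun_getElem l fun r ↦ 1 - r⁻¹ * x]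

theorem coeff_sum_monomial_of_injective {R ι : Type*} [Semiring R] [Fintype ι] {e : ι → ℕ}
    (he : Function.Injective e) (c : ι → R) (i : ι) :
    (∑ j, monomial (e j) (c j)).coeff (e i) = c i := by
  classical
  simp [finsetSum_coeff, coeff_monomial, he.eq_iff]

theorem sum_mul_exp_eq_exp_mul_eval {ι : Type*} [Fintype ι] (c : ι → ℂ) (e : ι → ℕ) (a w z : ℂ) :
    ∑ i, c i * exp ((a + e i • w) * z) =
      exp (a * z) * (∑ i, monomial (e i) (c i)).eval (exp (w * z)) := by
  simp only [eval_finsetSum, eval_monomial, Finset.mul_sum, ← exp_nat_mul, add_mul, exp_add,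
    nsmul_eq_mul, mul_assoc, mul_left_comm]

end Polynomial

theorem isExpPoly_const_mul_exp (c a : ℂ) : IsExpPoly fun z ↦ c * exp (a * z) :=
  ⟨1, fun _ ↦ c, fun _ ↦ a, by simp⟩

theorem eUnit_const_mul_exp {c : ℂ} (hc : c ≠ 0) (a : ℂ) : EUnit fun z ↦ c * exp (a * z) := by
  refine ⟨isExpPoly_const_mul_exp c a, _, isExpPoly_const_mul_exp c⁻¹ (-a), funext fun z ↦ ?_⟩
  simp only [Pi.mul_apply, Pi.one_apply, neg_mul]
  rw [mul_mul_mul_comm, mul_inv_cancel₀ hc, ← exp_add, add_neg_cancel, exp_zero, one_mul]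

/-- Up to a unit, a simple exponential polynomial is a finite product of factors
`1 - αᵢ e^{μz}`. -/
theorem simple_factorization (f : ℂ → ℂ) (hf : IsSimple f) :
    ∃ (u : ℂ → ℂ) (μ : ℂ) (n : ℕ) (α : Fin n → ℂ),
      EUnit u ∧ μ ≠ 0 ∧ (∀ i, α i ≠ 0) ∧
      ∀ z : ℂ, f z = u z * ∏ i, (1 - α i * Complex.exp (μ * z)) := by
  obtain ⟨N, c, m, ⟨hc, hm, hf⟩, hrank⟩ := hf
  obtain ⟨i₀, w, e, hw, hme⟩ := exists_eq_add_nsmul_of_finrank_span_eq_one m hrank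
  have he : Function.Injective e := fun i j hij ↦ hm (by rw [hme i, hme j, hij])
  have he₀ : e i₀ = 0 := by simpa [hw] using hme i₀
  let P : Polynomial ℂ := ∑ i, Polynomial.monomial (e i) (c i)
  have hP₀ : P.coeff 0 = c i₀ := he₀ ▸ coeff_sum_monomial_of_injective he c i₀
  obtain ⟨n, α, hα, hP⟩ :=
    exists_eval_eq_coeff_zero_mul_prod_one_sub_mul (IsAlgClosed.splits P) (hP₀ ▸ hc i₀)
  refine ⟨fun z ↦ c i₀ * exp (m i₀ * z), w, n, α, eUnit_const_mul_exp (hc i₀) _, hw, hα,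
    fun z ↦ ?_⟩
  calc f z = ∑ i, c i * exp ((m i₀ + e i • w) * z) := by simp only [hf z, ← hme]
    _ = exp (m i₀ * z) * P.eval (exp (w * z)) := sum_mul_exp_eq_exp_mul_eval c e _ w z
    _ = c i₀ * exp (m i₀ * z) * ∏ i, (1 - α i * exp (w * z)) := by rw [hP, hP₀]; ring
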